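/- Let M = G/H be a compact homogeneous LCK manifold with dim 𝔷 = 2, choose an orthonormal basis {ξ, η} of 𝔷 with ξ = Jθ^♯ and η ⊥ ξ. Then b := θ(η) is a nonzero constant. -/

import Mathlib

/-!
We work in an abstract, algebraic model of the differential geometry of a
(connected) smooth manifold `M`, since Mathlib does not yet provide Riemannian
metrics, Levi-Civita connections or Kähler/LCK geometry.

In the structure `RiemannianVF` below, `Pt` is the set of points of `M`,
`Fn` the commutative `ℝ`-algebra of smooth real-valued functions on `M`
(together with pointwise evaluation `eval`), `Vec` the `Fn`-module of smooth
vector fields, `D X f` the derivative of the function `f` in the direction of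
the vector field `X`, `lie` the Lie bracket of vector fields, `g` a Riemannian
metric and `nabla` its Levi-Civita connection (characterized by being
torsion-free and metric).  Genuine Riemannian manifolds provide models of this
structure.
-/

/-- Abstract model of the smooth functions / vector fields / Lie bracket /
Riemannian metric / Levi-Civita connection of a connected Riemannian
manifold. -/
structure RiemannianVF where
  /-- the points of the manifold `M` -/
  Pt : Type
  /-- the smooth real valued functions on `M` -/
  Fn : Type
  [instCommRing : CommRing Fn]
  [instAlgebra : Algebra ℝ Fn]
  /-- evaluation of a smooth function at a point of `M` -/
  eval : Fn →ₐ[ℝ] (Pt → ℝ)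
  eval_injective : Function.Injective eval
  /-- the smooth vector fields on `M` -/
  Vec : Type
  [instAddCommGroup : AddCommGroup Vec]
  [instModuleFn : Module Fn Vec]
  [instModuleR : Module ℝ Vec]
  [instTower : IsScalarTower ℝ Fn Vec]
  /-- derivative of a smooth function along a vector field -/
  D : Vec → Fn → Fn
  D_add_left : ∀ X Y f, D (X + Y) f = D X f + D Y f
  D_smul_left : ∀ (f : Fn) (X : Vec) (h : Fn), D (f • X) h = f * D X h
  D_add : ∀ X f h, D X (f + h) = D X f + D X h
  D_mul : ∀ X f h, D X (f * h) = f * D X h + h * D X f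
  D_algebraMap : ∀ X (c : ℝ), D X (algebraMap ℝ Fn c) = 0
  /-- the Lie bracket of vector fields -/
  lie : Vec → Vec → Vec
  lie_skew : ∀ X Y, lie X Y = - lie Y X
  lie_add_left : ∀ X Y Z, lie (X + Y) Z = lie X Z + lie Y Z
  lie_smul : ∀ X (f : Fn) Y, lie X (f • Y) = (D X f) • Y + f • lie X Y
  lie_jacobi : ∀ X Y Z, lie X (lie Y Z) = lie (lie X Y) Z + lie Y (lie X Z)
  D_lie : ∀ X Y f, D (lie X Y) f = D X (D Y f) - D Y (D X f)
  /-- the Riemannian metric -/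
  g : Vec → Vec → Fn
  g_symm : ∀ X Y, g X Y = g Y X
  g_add_left : ∀ X Y Z, g (X + Y) Z = g X Z + g Y Z
  g_smul_left : ∀ (f : Fn) X Y, g (f • X) Y = f * g X Y
  g_nondeg : ∀ X, (∀ Y, g X Y = 0) → X = 0
  /-- the Levi-Civita connection of `g` -/
  nabla : Vec → Vec → Vec
  nabla_add_left : ∀ X Y Z, nabla (X + Y) Z = nabla X Z + nabla Y Z
  nabla_smul_left : ∀ (f : Fn) X Y, nabla (f • X) Y = f • nabla X Y
  nabla_add : ∀ X Y Z, nabla X (Y + Z) = nabla X Y + nabla X Z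
  nabla_smul : ∀ X (f : Fn) Y, nabla X (f • Y) = (D X f) • Y + f • nabla X Y
  torsion_free : ∀ X Y, nabla X Y - nabla Y X = lie X Y
  metric_compat : ∀ X Y Z, D X (g Y Z) = g (nabla X Y) Z + g Y (nabla X Z)
  /-- `M` is connected: a function with vanishing differential is constant -/
  connected : ∀ f, (∀ X, D X f = 0) → ∃ c : ℝ, f = algebraMap ℝ Fn c

attribute [instance] RiemannianVF.instCommRing RiemannianVF.instAlgebra
  RiemannianVF.instAddCommGroup RiemannianVF.instModuleFn
  RiemannianVF.instModuleR RiemannianVF.instTower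

/-- An almost Hermitian manifold: a Riemannian manifold together with a
skew-symmetric endomorphism `J` of the tangent bundle with `J ∘ J = -id`. -/
structure AlmostHermitianVF extends RiemannianVF where
  /-- the almost complex structure -/
  J : Vec → Vec
  J_add : ∀ X Y, J (X + Y) = J X + J Y
  J_smul : ∀ (f : Fn) X, J (f • X) = f • J X
  J_sq : ∀ X, J (J X) = - X
  J_skew : ∀ X Y, g (J X) Y = - g X (J Y)

namespace AlmostHermitianVF

variable (S : AlmostHermitianVF)

/-- the Lie derivative `(L_X J)(Y) = [X, JY] - J [X, Y]` of `J` along `X` -/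
def lieJ (X Y : S.Vec) : S.Vec := S.lie X (S.J Y) - S.J (S.lie X Y)

/-- the Nijenhuis tensor `N^J(X,Y) = [X,Y] + J[X,JY] + J[JX,Y] - [JX,JY]` -/
def nijenhuis (X Y : S.Vec) : S.Vec :=
  S.lie X Y + S.J (S.lie X (S.J Y)) + S.J (S.lie (S.J X) Y) - S.lie (S.J X) (S.J Y)

/-- the fundamental 2-form `ω = g(J·,·)` -/
def omega (X Y : S.Vec) : S.Fn := S.g (S.J X) Y

/-- the exterior differential of the fundamental 2-form `ω`, via the usual
Koszul-type formula -/
def dOmega (X Y Z : S.Vec) : S.Fn :=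
  S.D X (S.omega Y Z) - S.D Y (S.omega X Z) + S.D Z (S.omega X Y)
    - S.omega (S.lie X Y) Z + S.omega (S.lie X Z) Y - S.omega (S.lie Y Z) X

/-- a vector field `X` is holomorphic if `L_X J = 0` -/
def Holomorphic (X : S.Vec) : Prop := ∀ Y, S.lieJ X Y = 0

end AlmostHermitianVF

/-- A Hermitian manifold: an almost Hermitian manifold whose almost complex
structure is integrable (vanishing Nijenhuis tensor). -/
structure HermitianVF extends AlmostHermitianVF where
  integrable : ∀ X Y, toAlmostHermitianVF.nijenhuis X Y = 0

/-- A Kähler manifold: a Hermitian manifold whose complex structure is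
parallel with respect to the Levi-Civita connection. -/
structure KaehlerVF extends HermitianVF where
  kaehler : ∀ X Y, nabla X (J Y) = J (nabla X Y)

/-- A locally conformally Kähler (LCK) manifold: a Hermitian manifold whose
fundamental 2-form `ω` satisfies `dω = -2 θ ∧ ω` for a closed 1-form `θ`
(the Lee form). -/
structure LCKVF extends HermitianVF where
  /-- the Lee form -/
  θ : Vec → Fn
  θ_add : ∀ X Y, θ (X + Y) = θ X + θ Y
  θ_smul : ∀ (f : Fn) X, θ (f • X) = f * θ X
  /-- the Lee form is closed -/
  θ_closed : ∀ X Y, D X (θ Y) - D Y (θ X) - θ (lie X Y) = 0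
  /-- the LCK condition `dω = -2 θ ∧ ω` -/
  lck : ∀ X Y Z, toAlmostHermitianVF.dOmega X Y Z =
    -(2 : Fn) * (θ X * toAlmostHermitianVF.omega Y Z
      - θ Y * toAlmostHermitianVF.omega X Z
      + θ Z * toAlmostHermitianVF.omega X Y)

/-- A compact homogeneous locally conformally Kähler manifold `M = G/H`:
a compact connected LCK manifold with nonvanishing Lee form `θ` normalized to
unit length, acted on transitively and effectively by a compact connected Lie
group `G` of holomorphic isometries.  The action is recorded infinitesimally:
`gAlg` is the Lie algebra `𝔤` of `G`, realized as the (finite-dimensional) Lie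
algebra of fundamental vector fields on `M` (recall `[X^a, X^b] = -X^{[a,b]}`,
so `gAlg` is a Lie subalgebra of the vector fields, anti-isomorphic to `𝔤`);
the fundamental fields are Killing (`G` acts by isometries) and holomorphic
(`G` preserves `J`), they span every tangent space (`G` acts transitively,
recorded both pointwise and through the constancy of invariant functions),
and `𝔤` is the Lie algebra of a *compact* group, i.e. it is reductive:
`𝔤 = 𝔷(𝔤) ⊕ [𝔤,𝔤]` (recorded as: `𝔤` is spanned by central elements and
brackets).  Compactness of `M` is recorded via a topology on the points
together with the first-derivative test for extrema of smooth functions. -/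
structure CompactHomogeneousLCKVF extends LCKVF where
  [instTop : TopologicalSpace Pt]
  [instCompact : CompactSpace Pt]
  [instNonempty : Nonempty Pt]
  eval_continuous : ∀ f, Continuous (eval f)
  /-- the first-derivative test: at a global extremum the differential of a
  smooth function vanishes (every global extremum exists by compactness) -/
  eval_crit : ∀ (f : Fn) (x : Pt),
    (IsMaxOn (eval f) Set.univ x ∨ IsMinOn (eval f) Set.univ x) →
    ∀ X, eval (D X f) x = 0
  /-- the vector field `θ^♯` metrically dual to the Lee form -/
  θsharp : Vec
  θsharp_spec : ∀ Y, g θsharp Y = θ Y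
  /-- the Lee form has unit length (in particular `θ ≠ 0`) -/
  θ_unit : g θsharp θsharp = 1
  /-- the Lie algebra `𝔤` of fundamental vector fields of the `G`-action -/
  gAlg : Submodule ℝ Vec
  gAlg_fd : FiniteDimensional ℝ gAlg
  gAlg_lie : ∀ X ∈ gAlg, ∀ Y ∈ gAlg, lie X Y ∈ gAlg
  /-- `G` acts by isometries: fundamental fields are Killing -/
  gAlg_killing : ∀ X ∈ gAlg, ∀ Y Z, D X (g Y Z) = g (lie X Y) Z + g Y (lie X Z)
  /-- `G` preserves `J`: fundamental fields are holomorphic -/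
  gAlg_holo : ∀ X ∈ gAlg, ∀ Y, lie X (J Y) = J (lie X Y)
  /-- `G` preserves the Lee form -/
  gAlg_theta : ∀ X ∈ gAlg, ∀ Y, D X (θ Y) = θ (lie X Y)
  /-- transitivity, pointwise: every tangent vector at every point is the
  value of a fundamental vector field -/
  gAlg_span : ∀ (V : Vec) (x : Pt), ∃ X ∈ gAlg, ∀ f, eval (D X f) x = eval (D V f) x
  /-- transitivity: `G`-invariant functions are constant -/
  gAlg_transitive : ∀ f, (∀ X ∈ gAlg, D X f = 0) → ∃ c : ℝ, f = algebraMap ℝ Fn c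
  /-- `𝔤` is the Lie algebra of a compact Lie group, hence reductive:
  it is spanned by its center together with its derived algebra -/
  gAlg_reductive : ∀ X ∈ gAlg, X ∈ Submodule.span ℝ
    ({Z | Z ∈ gAlg ∧ ∀ W ∈ gAlg, lie Z W = 0} ∪
     {Z | ∃ U ∈ gAlg, ∃ V ∈ gAlg, Z = lie U V})

attribute [instance] CompactHomogeneousLCKVF.instTop
  CompactHomogeneousLCKVF.instCompact CompactHomogeneousLCKVF.instNonempty
  CompactHomogeneousLCKVF.gAlg_fd

namespace CompactHomogeneousLCKVF

variable (S : CompactHomogeneousLCKVF)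

/-- the set of fundamental vector fields coming from the center `𝔷` of `𝔤` -/
def centerSet : Set S.Vec :=
  {X | X ∈ S.gAlg ∧ ∀ Y ∈ S.gAlg, S.lie X Y = 0}

/-- the dimension of the center `𝔷` of `𝔤` (the centralizer set is an
`ℝ`-subspace of `𝔤`, so it coincides with its span) -/
noncomputable def centerDim : ℕ :=
  Module.finrank ℝ (Submodule.span ℝ (centerSet S))

/-- a compact homogeneous LCK manifold is Vaisman if its Lee form is parallel:
`∇θ = 0`, equivalently `∇θ^♯ = 0`. -/
def Vaisman : Prop := ∀ X, S.nabla X S.θsharp = 0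

end CompactHomogeneousLCKVF

/-!
Write `T = θ^♯`.  Since `JT` and `η` are central, hence holomorphic, integrability of `J` makes
`T` holomorphic too, so `T`, `η` and `Jη` commute pairwise.  On commuting fields `dω` consists
only of derivatives of scalar products; on `(T, η, Jη)` these are `g(η, η) = 1`,
`g(JT, η) = 0` and `g(T, η) = θ(η)`, the last differentiated along `η`, where it is constant.
So `dω = -2 θ ∧ ω` reads `0 = -2 (1 - θ(η)²)`, that is, `θ(η) = ±1`.
-/

namespace RiemannianVF

variable (S : RiemannianVF)

lemma D_zero (X : S.Vec) : S.D X 0 = 0 := by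
  simpa using S.D_algebraMap X 0

lemma D_one (X : S.Vec) : S.D X 1 = 0 := by
  simpa using S.D_algebraMap X 1

lemma lie_self (X : S.Vec) : S.lie X X = 0 := by
  rw [← S.torsion_free, sub_self]

lemma g_zero_left (X : S.Vec) : S.g 0 X = 0 := by
  simpa using S.g_smul_left 0 0 X

lemma g_neg_right (X Y : S.Vec) : S.g X (-Y) = -S.g X Y := by
  simpa [S.g_symm] using S.g_smul_left (-1) Y X

lemma D_eq_zero_of_mul_self_eq_one {f : S.Fn} (hf : f * f = 1) (X : S.Vec) : S.D X f = 0 := by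
  have h : f * S.D X f + f * S.D X f = 0 := by
    rw [← S.D_mul, hf, S.D_one]
  have h_two : (2 : ℝ) • S.D X f = 0 := by
    rw [two_smul]
    linear_combination f * h - 2 * S.D X f * hf
  exact (smul_eq_zero.mp h_two).resolve_left two_ne_zero

lemma eq_one_or_eq_neg_one_of_mul_self_eq_one {f : S.Fn} (hf : f * f = 1) : f = 1 ∨ f = -1 := by
  obtain ⟨c, rfl⟩ := S.connected f (S.D_eq_zero_of_mul_self_eq_one hf)
  -- `S.Fn` is the zero ring when `S.Pt` is empty, so `algebraMap ℝ S.Fn` need not be injective.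
  rcases subsingleton_or_nontrivial S.Fn with _ | _
  · exact Or.inl (Subsingleton.elim _ _)
  · have hc : c * c = 1 := (algebraMap ℝ S.Fn).injective (by rw [map_mul, hf, map_one])
    exact (mul_self_eq_one_iff.mp hc).imp (by rintro rfl; simp) (by rintro rfl; simp)

end RiemannianVF

namespace AlmostHermitianVF

variable (S : AlmostHermitianVF)

lemma J_zero : S.J 0 = 0 := by
  simpa using S.J_smul 0 0

lemma eq_zero_of_J_eq_zero {X : S.Vec} (h : S.J X = 0) : X = 0 := by
  rw [← neg_eq_zero, ← S.J_sq, h, S.J_zero]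

lemma omega_zero_left (X : S.Vec) : S.omega 0 X = 0 := by
  rw [omega, S.J_zero, S.g_zero_left]

lemma omega_J_right (X Y : S.Vec) : S.omega X (S.J Y) = S.g X Y := by
  rw [omega, S.J_skew, S.J_sq, S.g_neg_right, neg_neg]

variable {S} in
lemma Holomorphic.lie_J {X : S.Vec} (hX : S.Holomorphic X) (Y : S.Vec) :
    S.lie X (S.J Y) = S.J (S.lie X Y) :=
  sub_eq_zero.mp (hX Y)

lemma dOmega_J_right_of_lie_eq_zero {X Y : S.Vec} (hXY : S.lie X Y = 0)
    (hXJY : S.lie X (S.J Y) = 0) (hYJY : S.lie Y (S.J Y) = 0) :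
    S.dOmega X Y (S.J Y) =
      S.D X (S.g Y Y) - S.D Y (S.g X Y) + S.D (S.J Y) (S.g (S.J X) Y) := by
  simp only [dOmega, hXY, hXJY, hYJY, omega_J_right, omega_zero_left, S.g_zero_left,
    sub_zero, add_zero]
  rw [omega]

end AlmostHermitianVF

namespace HermitianVF

variable (S : HermitianVF)

lemma holomorphic_of_holomorphic_J {X : S.Vec} (hJX : S.Holomorphic (S.J X)) :
    S.Holomorphic X := by
  intro Y
  have h_nijenhuis : S.lie X Y + S.J (S.lie X (S.J Y)) = 0 := by
    simpa [AlmostHermitianVF.nijenhuis, hJX.lie_J] using S.integrable X Y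
  have h_J := congrArg S.J h_nijenhuis
  rw [S.J_add, S.J_sq, S.J_zero, ← sub_eq_add_neg] at h_J
  exact sub_eq_zero.mpr (sub_eq_zero.mp h_J).symm

end HermitianVF

namespace LCKVF

variable (S : LCKVF)

lemma theta_zero : S.θ 0 = 0 := by
  simpa using S.θ_smul 0 0

lemma theta_mul_self_eq_one_of_lie_eq_zero {T η : S.Vec} (hT : ∀ Y, S.g T Y = S.θ Y)
    (hT_unit : S.g T T = 1) (hTη : S.lie T η = 0) (hTJη : S.lie T (S.J η) = 0)
    (hηJη : S.lie η (S.J η) = 0) (hη_const : S.D η (S.θ η) = 0)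
    (hη_unit : S.g η η = 1) (hη_orth : S.g (S.J T) η = 0) :
    S.θ η * S.θ η = 1 := by
  have h_dOmega : S.dOmega T η (S.J η) = 0 := by
    rw [S.dOmega_J_right_of_lie_eq_zero hTη hTJη hηJη, hT, hη_unit, hη_orth, hη_const,
      S.D_one, S.D_zero, sub_zero, add_zero]
  have h_wedge := S.lck T η (S.J η)
  rw [h_dOmega, S.omega_J_right, S.omega_J_right, hη_unit, hT, ← hT T, hT_unit,
    AlmostHermitianVF.omega, hη_orth] at h_wedge
  have h_two : (2 : ℝ) • (S.θ η * S.θ η - 1) = 0 := by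
    rw [two_smul]
    linear_combination -h_wedge
  exact sub_eq_zero.mp ((smul_eq_zero.mp h_two).resolve_left two_ne_zero)

end LCKVF

namespace CompactHomogeneousLCKVF

variable (S : CompactHomogeneousLCKVF)

lemma holomorphic_of_mem_gAlg {X : S.Vec} (hX : X ∈ S.gAlg) : S.Holomorphic X :=
  fun Y => sub_eq_zero.mpr (S.gAlg_holo X hX Y)

lemma D_theta_eq_zero_of_mem_centerSet {X Y : S.Vec} (hX : X ∈ S.centerSet) (hY : Y ∈ S.gAlg) :
    S.D X (S.θ Y) = 0 := by
  rw [S.gAlg_theta X hX.1, hX.2 Y hY, S.theta_zero]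

end CompactHomogeneousLCKVF

theorem theta_eta_nonzero_constant_general (S : LCKVF) {T η : S.Vec}
    (hT : ∀ Y, S.g T Y = S.θ Y) (hT_unit : S.g T T = 1)
    (hJT : S.Holomorphic (S.J T)) (hη : S.Holomorphic η)
    (h_comm : S.lie η (S.J T) = 0) (hη_const : S.D η (S.θ η) = 0)
    (hη_unit : S.g η η = 1) (hη_orth : S.g (S.J T) η = 0) :
    S.θ η = 1 ∨ S.θ η = -1 := by
  have hTη : S.lie T η = 0 := by
    rw [S.lie_skew, S.eq_zero_of_J_eq_zero ((hη.lie_J T).symm.trans h_comm), neg_zero]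
  have hTJη : S.lie T (S.J η) = 0 := by
    rw [(S.holomorphic_of_holomorphic_J hJT).lie_J, hTη, S.J_zero]
  have hηJη : S.lie η (S.J η) = 0 := by
    rw [hη.lie_J, S.lie_self, S.J_zero]
  exact S.eq_one_or_eq_neg_one_of_mul_self_eq_one
    (S.theta_mul_self_eq_one_of_lie_eq_zero hT hT_unit hTη hTJη hηJη hη_const hη_unit hη_orth)

/-- Remark after Lemma 3.2.  Let `M = G/H` be a compact
homogeneous LCK manifold with `dim 𝔷 = 2` and let `{ξ, η}` be an orthonormal
basis of `𝔷` with `ξ = Jθ^♯` and `η ⊥ ξ`.  Then `b := θ(η)` is a nonzero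
constant.  (If `b = 0`, then by Lemma 3.1 `θ` would vanish on the whole
algebra of Killing fields, which is impossible.) -/
theorem theta_eta_nonzero_constant (S : CompactHomogeneousLCKVF)
    (h2 : S.centerDim = 2)
    (hξ : S.J S.θsharp ∈ S.centerSet)
    (η : S.Vec) (hη : η ∈ S.centerSet)
    (hη_unit : S.g η η = 1) (hη_orth : S.g (S.J S.θsharp) η = 0) :
    ∃ b : ℝ, b ≠ 0 ∧ S.θ η = algebraMap ℝ S.Fn b := by
  rcases theta_eta_nonzero_constant_general S.toLCKVF S.θsharp_spec S.θ_unit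
    (S.holomorphic_of_mem_gAlg hξ.1) (S.holomorphic_of_mem_gAlg hη.1) (hη.2 _ hξ.1)
    (S.D_theta_eq_zero_of_mem_centerSet hη hη.1) hη_unit hη_orth with h | h
  · exact ⟨1, one_ne_zero, by rw [h, map_one]⟩
  · exact ⟨-1, neg_ne_zero.mpr one_ne_zero, by rw [h, map_neg, map_one]⟩
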